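/- Let Γ = (G,σ) be a connected signed graph with underlying weighted graph G = (V,E,w,μ,κ), nonnegative potential κ ≥ 0, and signature σ : E → {−1,+1}. Let λ^σ_1 ≤ … ≤ λ^σ_n be the eigenvalues of the normalized signed Laplacian 𝔏^σ listed with multiplicity in ascending order, and let ℓ = |E| − |V| + 1 be the cyclomatic number of G. Then for every integer k with ℓ + 1 ≤ k ≤ n, the (k−ℓ)-way signed Cheeger constant satisfies ρ^σ_{k−ℓ}(Γ) ≤ √(2 τ_Γ λ^σ_k), where τ_Γ = max_{i∈V} d(i)/μ_i. -/

import Mathlib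

open BigOperators Matrix Polynomial

/-- Weighted degree `d(i) = ∑_j w_{ij}` (with `w` vanishing off edges). -/
noncomputable def wdeg {V : Type*} [Fintype V] (w : V → V → ℝ) (i : V) : ℝ := ∑ j, w i j

/-- The normalized signed Laplacian `𝔏^σ = M⁻¹ (D - A^σ + K)`, where `A^σ` has entries
`σ_{ij} w_{ij}`. -/
noncomputable def signedNormLap {V : Type*} [Fintype V] [DecidableEq V]
    (w : V → V → ℝ) (s : V → V → ℝ) (μ κ : V → ℝ) : Matrix V V ℝ :=
  (Matrix.diagonal μ)⁻¹ *
    (Matrix.diagonal (wdeg w) - Matrix.of (fun i j => s i j * w i j) + Matrix.diagonal κ)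

/-- `|E^+(V₁, V₂)|`: total weight of positive edges between `V₁` and `V₂`. -/
noncomputable def posEdgeWeight {V : Type*} [Fintype V]
    (w : V → V → ℝ) (s : V → V → ℝ) (V₁ V₂ : Finset V) : ℝ :=
  ∑ x ∈ V₁, ∑ y ∈ V₂, if s x y = 1 then w x y else 0

/-- `|E^-(V₁, V₂)|`: total weight of negative edges between `V₁` and `V₂`. -/
noncomputable def negEdgeWeight {V : Type*} [Fintype V]
    (w : V → V → ℝ) (s : V → V → ℝ) (V₁ V₂ : Finset V) : ℝ :=
  ∑ x ∈ V₁, ∑ y ∈ V₂, if s x y = -1 then w x y else 0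

/-- `|∂ S|`: total weight of the edge boundary of `S`. -/
noncomputable def boundaryWeight {V : Type*} [Fintype V] [DecidableEq V]
    (w : V → V → ℝ) (S : Finset V) : ℝ :=
  ∑ x ∈ S, ∑ y ∈ Sᶜ, w x y

/-- The quantity `β^σ(V₁, V₂)` associated to a sub-bipartition `(V₁, V₂)`. -/
noncomputable def signedBipartiteness {V : Type*} [Fintype V] [DecidableEq V]
    (w : V → V → ℝ) (s : V → V → ℝ) (μ : V → ℝ) (V₁ V₂ : Finset V) : ℝ :=
  (2 * posEdgeWeight w s V₁ V₂ + negEdgeWeight w s V₁ V₁ + negEdgeWeight w s V₂ V₂ +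
      boundaryWeight w (V₁ ∪ V₂)) / ∑ x ∈ V₁ ∪ V₂, μ x

/-- The `k`-way signed Cheeger constant `ρ^σ_k(Γ)`: infimum over `k`-sub-bipartitions of the
maximal `β^σ`. -/
noncomputable def signedCheeger {V : Type*} [Fintype V] [DecidableEq V]
    (k : ℕ) (w : V → V → ℝ) (s : V → V → ℝ) (μ : V → ℝ) : ℝ :=
  sInf {r | ∃ p : Fin k → Finset V × Finset V,
    (∀ i, Disjoint (p i).1 (p i).2 ∧ ((p i).1 ∪ (p i).2).Nonempty) ∧
    (Pairwise fun i j => Disjoint ((p i).1 ∪ (p i).2) ((p j).1 ∪ (p j).2)) ∧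
    r = ⨆ i, signedBipartiteness w s μ (p i).1 (p i).2}

/-!
Let `B = D - A^σ + K`. The eigenvectors for `λ₁, …, λ_k` span a `k`-dimensional space `W` on which
the form of `H = B - λ_k M` is nonpositive. If the off-diagonal pattern of `H` were a forest,
eliminating the leaves one after another would produce functions with disjoint supports and
nonpositive form, one for each nonpositive pivot, and there would be at least `dim W` of them. Each
of the `ℓ` remaining edges `ij` is cancelled by adding to `H` the positive semidefinite rank-one
matrix `|H_ij| v vᵀ` with `v = e_i ± e_j`; this only increases the form and costs one dimension of
`W`. So `k - ℓ` disjointly supported functions with signed Rayleigh quotient at most `λ_k` remain,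
and each of them has a level set pair with `β^σ ≤ √(2 τ λ_k)`, by the co-area formula and
Cauchy–Schwarz as in the classical proof of Cheeger's inequality.
-/

section Forest

variable {V : Type*}

lemma exists_subsingleton_neighborSet_of_isAcyclic [Finite V] [Nonempty V] {F : SimpleGraph V}
    (hF : F.IsAcyclic) : ∃ x, (F.neighborSet x).Subsingleton := by
  classical
  have := Fintype.ofFinite V
  obtain ⟨T, hFT, -, hT⟩ :=
    SimpleGraph.connected_top.exists_isTree_le_of_le_of_isAcyclic le_top hF
  cases subsingleton_or_nontrivial V
  · exact ⟨Classical.arbitrary V, Set.subsingleton_of_subsingleton⟩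
  · obtain ⟨x, hx⟩ := hT.exists_vert_degree_one_of_nontrivial
    obtain ⟨p, -, hp⟩ := SimpleGraph.degree_eq_one_iff_existsUnique_adj.mp hx
    exact ⟨x, fun i hi j hj => (hp i (hFT hi)).trans (hp j (hFT hj)).symm⟩

lemma exists_mem_subsingleton_adj_of_isAcyclic {F : SimpleGraph V} (hF : F.IsAcyclic)
    {S : Finset V} (hS : S.Nonempty) : ∃ x ∈ S, {j | j ∈ S ∧ F.Adj x j}.Subsingleton := by
  have := hS.to_subtype
  obtain ⟨x, hx⟩ := exists_subsingleton_neighborSet_of_isAcyclic (hF.induce (S : Set V))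
  exact ⟨x, x.2, fun i hi j hj =>
    congrArg Subtype.val (hx (show (⟨i, hi.1⟩ : (S : Set V)) ∈ _ from hi.2)
      (show (⟨j, hj.1⟩ : (S : Set V)) ∈ _ from hj.2))⟩

lemma card_le_card_edgeFinset_add_card_connectedComponent [Fintype V] (G : SimpleGraph V)
    [Fintype G.edgeSet] [Fintype G.ConnectedComponent] :
    Fintype.card V ≤ G.edgeFinset.card + Fintype.card G.ConnectedComponent := by
  classical
  rcases isEmpty_or_nonempty V with hV | ⟨⟨r⟩⟩
  · simp
  let star : Finset (Sym2 V) :=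
    (Finset.univ.erase (G.connectedComponentMk r)).image fun c => s(r, c.out)
  let G' : SimpleGraph V := G ⊔ SimpleGraph.fromEdgeSet star
  have hreach : ∀ v, G'.Reachable r v := by
    intro v
    have hv : G'.Reachable (G.connectedComponentMk v).out v :=
      (SimpleGraph.ConnectedComponent.exact (Quot.out_eq (G.connectedComponentMk v))).mono
        le_sup_left
    by_cases hrv : G.connectedComponentMk v = G.connectedComponentMk r
    · exact (SimpleGraph.ConnectedComponent.exact hrv.symm).mono le_sup_left
    · by_cases hr : r = (G.connectedComponentMk v).out
      · rwa [← hr] at hv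
      · refine SimpleGraph.Reachable.trans (SimpleGraph.Adj.reachable (Or.inr ?_)) hv
        exact (SimpleGraph.fromEdgeSet_adj _).mpr
          ⟨Finset.mem_image_of_mem _ (Finset.mem_erase.mpr ⟨hrv, Finset.mem_univ _⟩), hr⟩
  have hconn : G'.Connected :=
    { preconnected := fun u v => (hreach u).symm.trans (hreach v), nonempty := ⟨r⟩ }
  have hsub : G'.edgeFinset ⊆ G.edgeFinset ∪ star := by
    intro e
    simp only [G', SimpleGraph.mem_edgeFinset, SimpleGraph.edgeSet_sup,
      SimpleGraph.edgeSet_fromEdgeSet, Finset.mem_union]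
    exact Or.imp_right fun h => h.1
  have hstar : star.card + 1 ≤ Fintype.card G.ConnectedComponent := by
    have hle : star.card ≤ _ := Finset.card_image_le
    rw [← Finset.card_univ,
      ← Finset.card_erase_add_one (Finset.mem_univ (G.connectedComponentMk r))]
    exact Nat.add_le_add_right hle 1
  have hcard := hconn.card_vert_le_card_edgeSet_add_one
  rw [Nat.card_eq_fintype_card, Nat.card_eq_fintype_card, ← SimpleGraph.edgeFinset_card] at hcard
  have := (Finset.card_le_card hsub).trans (Finset.card_union_le _ _)
  omega

lemma exists_isAcyclic_adj_or_mem_card_le [Fintype V] (G : SimpleGraph V)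
    [Fintype G.edgeSet] : ∃ F : SimpleGraph V, F.IsAcyclic ∧ ∃ D : Finset (Sym2 V),
      (∀ i j, G.Adj i j → F.Adj i j ∨ s(i, j) ∈ D) ∧
      D.card + Fintype.card V ≤ G.edgeFinset.card + Nat.card G.ConnectedComponent := by
  classical
  obtain ⟨F, hFG, hF, hreach⟩ := G.exists_isAcyclic_reachable_eq_le
  refine ⟨F, hF, G.edgeFinset \ F.edgeFinset, ?_, ?_⟩
  · intro i j h
    simpa [h] using em _
  · have hc : Nat.card F.ConnectedComponent = Nat.card G.ConnectedComponent := by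
      simp only [SimpleGraph.ConnectedComponent, hreach]
    have h1 := card_le_card_edgeFinset_add_card_connectedComponent F
    have h2 := Finset.card_sdiff_add_card_eq_card (SimpleGraph.edgeFinset_mono hFG)
    rw [← Nat.card_eq_fintype_card (α := F.ConnectedComponent), hc] at h1
    omega

lemma card_edgeFinset_add_one_sub_card_add_card [Fintype V] {G : SimpleGraph V}
    [Fintype G.edgeSet] (hG : G.Connected) :
    G.edgeFinset.card + 1 - Fintype.card V + Fintype.card V =
      G.edgeFinset.card + Nat.card G.ConnectedComponent := by
  have := hG.nonempty
  have := hG.preconnected.subsingleton_connectedComponent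
  have hcard := hG.card_vert_le_card_edgeSet_add_one
  rw [Nat.card_eq_fintype_card, Nat.card_eq_fintype_card, ← SimpleGraph.edgeFinset_card] at hcard
  rw [Nat.card_unique, Nat.sub_add_cancel hcard]

end Forest

section QuadraticForm

variable {V : Type*}

/-- Schur complement of a symmetric matrix with respect to the pivot `H x x`, kept on the full
index set: its row and column at `x` vanish. -/
noncomputable def pivotSchurCompl (H : Matrix V V ℝ) (x : V) : Matrix V V ℝ :=
  H - (H x x)⁻¹ • vecMulVec (H x) (H x)

lemma pivotSchurCompl_apply (H : Matrix V V ℝ) (x i j : V) :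
    pivotSchurCompl H x i j = H i j - (H x x)⁻¹ * (H x i * H x j) := by
  simp only [pivotSchurCompl, Matrix.sub_apply, Matrix.smul_apply, vecMulVec_apply, smul_eq_mul]

lemma pivotSchurCompl_isSymm {H : Matrix V V ℝ} (hH : H.IsSymm) (x : V) :
    (pivotSchurCompl H x).IsSymm := by
  refine IsSymm.ext fun i j => ?_
  rw [pivotSchurCompl_apply, pivotSchurCompl_apply, hH.apply]
  ring

lemma pivotSchurCompl_pivot_row {H : Matrix V V ℝ} {x : V} (hx : H x x ≠ 0) :
    pivotSchurCompl H x x = 0 := by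
  ext j
  rw [pivotSchurCompl_apply, inv_mul_cancel_left₀ hx, sub_self, Pi.zero_apply]

variable [Fintype V]

lemma dotProduct_pivotSchurCompl_mulVec (H : Matrix V V ℝ) (x : V) (f : V → ℝ) :
    f ⬝ᵥ pivotSchurCompl H x *ᵥ f = f ⬝ᵥ H *ᵥ f - (H x x)⁻¹ * (H x ⬝ᵥ f) ^ 2 := by
  rw [pivotSchurCompl, sub_mulVec, dotProduct_sub, smul_mulVec, dotProduct_smul, vecMulVec_mulVec,
    op_smul_eq_smul, dotProduct_smul, smul_eq_mul, smul_eq_mul, dotProduct_comm f (H x), sq]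

variable [DecidableEq V]

lemma dotProduct_mulVec_add_smul_single {H : Matrix V V ℝ} (hH : H.IsSymm) (x : V) (a : ℝ)
    (f : V → ℝ) :
    (f + a • Pi.single x 1) ⬝ᵥ H *ᵥ (f + a • Pi.single x 1) =
      f ⬝ᵥ H *ᵥ f + 2 * a * (H x ⬝ᵥ f) + H x x * a ^ 2 := by
  have hcol : f ⬝ᵥ H *ᵥ Pi.single x 1 = H x ⬝ᵥ f := by
    rw [dotProduct_mulVec, dotProduct_single_one, ← mulVec_transpose, hH.eq]
    rfl
  have hsingle : ∀ v : V → ℝ, Pi.single x 1 ⬝ᵥ H *ᵥ v = H x ⬝ᵥ v := fun v =>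
    single_one_dotProduct _ _
  have hpivot : H x ⬝ᵥ Pi.single x 1 = H x x := dotProduct_single_one _ _
  simp only [mulVec_add, mulVec_smul, dotProduct_add, add_dotProduct, smul_dotProduct,
    dotProduct_smul, hcol, hsingle, smul_eq_mul,
    hpivot]
  ring

lemma dotProduct_pivotSchurCompl_mulVec_add_smul_single {H : Matrix V V ℝ} (hH : H.IsSymm) {x : V}
    (hx : H x x ≠ 0) (a : ℝ) (f : V → ℝ) :
    (f + a • Pi.single x 1) ⬝ᵥ pivotSchurCompl H x *ᵥ (f + a • Pi.single x 1) =
      f ⬝ᵥ pivotSchurCompl H x *ᵥ f := by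
  simp only [dotProduct_mulVec_add_smul_single (pivotSchurCompl_isSymm hH x),
    pivotSchurCompl_pivot_row hx, zero_dotProduct, Pi.zero_apply, mul_zero, zero_mul, add_zero]

/-- The correction of `f` at `x` minimising the quadratic form of `H` when `0 < H x x`. -/
noncomputable def pivotLift (H : Matrix V V ℝ) (x : V) (f : V → ℝ) : V → ℝ :=
  f + (-((H x x)⁻¹ * (H x ⬝ᵥ f))) • Pi.single x 1

lemma pivotLift_apply_of_ne (H : Matrix V V ℝ) {x v : V} (hv : v ≠ x) (f : V → ℝ) :
    pivotLift H x f v = f v := by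
  simp [pivotLift, hv]

lemma dotProduct_mulVec_pivotLift {H : Matrix V V ℝ} (hH : H.IsSymm) {x : V} (hx : H x x ≠ 0)
    (f : V → ℝ) :
    pivotLift H x f ⬝ᵥ H *ᵥ pivotLift H x f = f ⬝ᵥ pivotSchurCompl H x *ᵥ f := by
  rw [pivotLift, dotProduct_mulVec_add_smul_single hH, dotProduct_pivotSchurCompl_mulVec]
  field_simp
  ring

end QuadraticForm

section Nodal

variable {V : Type*} [Fintype V]

open Function

/-- A family `(g t)` indexed by `t ∈ T` of nonzero functions with pairwise disjoint supports, on
each of which the quadratic form of `H` is nonpositive: the analogue of the nodal domains of an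
eigenfunction. -/
structure IsNodalFamily (H : Matrix V V ℝ) (T : Finset V) (g : V → V → ℝ) : Prop where
  ne_zero : ∀ t ∈ T, g t ≠ 0
  pairwiseDisjoint : (T : Set V).PairwiseDisjoint fun t => support (g t)
  form_nonpos : ∀ t ∈ T, g t ⬝ᵥ H *ᵥ g t ≤ 0

/-- The outcome of eliminating the vertices of `S`: a nodal family inside `S` indexed by the
vertices `T` with nonpositive pivot, such that the quadratic form is positive definite
on the functions on `S` that vanish on `T`. -/
structure IsPivotFamily (H : Matrix V V ℝ) (S T : Finset V) (g : V → V → ℝ) : Prop extends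
    IsNodalFamily H T g where
  subset : T ⊆ S
  support_subset : ∀ t ∈ T, support (g t) ⊆ S
  eq_zero_of_form_nonpos : ∀ f : V → ℝ, support f ⊆ S → (∀ t ∈ T, f t = 0) →
    f ⬝ᵥ H *ᵥ f ≤ 0 → f = 0

variable {H : Matrix V V ℝ}

section Elimination

variable [DecidableEq V] {S T : Finset V} {g : V → V → ℝ} {x : V}

lemma IsPivotFamily.insert (h : IsPivotFamily H (S.erase x) T g) (hxS : x ∈ S)
    (hx : H x x ≤ 0) : IsPivotFamily H S (insert x T) (update g x (Pi.single x 1)) := by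
  have hxT : x ∉ T := fun hxT => Finset.notMem_erase x S (h.subset hxT)
  have hg : ∀ t ∈ T, update g x (Pi.single x 1) t = g t := fun t ht =>
    update_of_ne (ne_of_mem_of_not_mem ht hxT) _ _
  have herase : (S.erase x : Set V) ⊆ S := Finset.coe_subset.mpr (S.erase_subset x)
  have hsingle : support (Pi.single x (1 : ℝ)) = {x} := Pi.support_single_of_ne one_ne_zero
  constructor
  case toIsNodalFamily =>
    constructor
    case ne_zero =>
      rw [Finset.forall_mem_insert, update_self]
      exact ⟨by simp, fun t ht => by rw [hg t ht]; exact h.ne_zero t ht⟩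
    case form_nonpos =>
      rw [Finset.forall_mem_insert, update_self]
      exact ⟨by simpa using hx, fun t ht => by rw [hg t ht]; exact h.form_nonpos t ht⟩
    case pairwiseDisjoint =>
      rw [Finset.coe_insert, Set.pairwiseDisjoint_insert_of_notMem (by simpa using hxT)]
      refine ⟨fun t ht u hu htu => ?_, fun t ht => ?_⟩
      · simpa only [onFun, hg t ht, hg u hu] using h.pairwiseDisjoint ht hu htu
      · rw [update_self, hg t ht, hsingle, Set.disjoint_singleton_left]
        exact fun hxt => Finset.notMem_erase x S (h.support_subset t ht hxt)
  case subset => exact Finset.insert_subset hxS (h.subset.trans (S.erase_subset x))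
  case support_subset =>
    rw [Finset.forall_mem_insert, update_self, hsingle]
    exact ⟨by simpa using hxS, fun t ht => hg t ht ▸ (h.support_subset t ht).trans herase⟩
  case eq_zero_of_form_nonpos =>
    intro f hf hfT hform
    rw [Finset.forall_mem_insert] at hfT
    refine h.eq_zero_of_form_nonpos f (fun v hv => ?_) hfT.2 hform
    exact Finset.mem_erase.mpr ⟨fun hvx => hv (hvx ▸ hfT.1), hf hv⟩

lemma disjoint_support_pivotLift {f₁ f₂ : V → ℝ}
    (hleaf : {j | j ∈ S.erase x ∧ H x j ≠ 0}.Subsingleton) (hf₁ : support f₁ ⊆ S.erase x)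
    (hf₂ : support f₂ ⊆ S.erase x) (hdisj : Disjoint (support f₁) (support f₂)) :
    Disjoint (support (pivotLift H x f₁)) (support (pivotLift H x f₂)) := by
  have hx : ∀ f : V → ℝ, support f ⊆ S.erase x → pivotLift H x f x ≠ 0 →
      ∃ v ∈ support f, v ∈ {j | j ∈ S.erase x ∧ H x j ≠ 0} := by
    intro f hf hne
    have hfx : f x = 0 := by
      by_contra hfx
      exact Finset.notMem_erase x S (hf hfx)
    have hdot : H x ⬝ᵥ f ≠ 0 := fun h0 => hne (by simp [pivotLift, hfx, h0])
    obtain ⟨v, -, hv⟩ := Finset.exists_ne_zero_of_sum_ne_zero hdot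
    have hfv : v ∈ support f := right_ne_zero_of_mul hv
    exact ⟨v, hfv, hf hfv, left_ne_zero_of_mul hv⟩
  rw [Set.disjoint_left] at hdisj ⊢
  intro v hv₁ hv₂
  rcases eq_or_ne v x with rfl | hvx
  · obtain ⟨u₁, hu₁, hleaf₁⟩ := hx f₁ hf₁ hv₁
    obtain ⟨u₂, hu₂, hleaf₂⟩ := hx f₂ hf₂ hv₂
    exact hdisj hu₁ (hleaf hleaf₁ hleaf₂ ▸ hu₂)
  · rw [mem_support, pivotLift_apply_of_ne H hvx] at hv₁ hv₂
    exact hdisj hv₁ hv₂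

lemma eq_zero_of_form_nonpos_of_pivotSchurCompl (hH : H.IsSymm) (hx : 0 < H x x)
    (hpos : ∀ f : V → ℝ, support f ⊆ S.erase x → (∀ t ∈ T, f t = 0) →
      f ⬝ᵥ pivotSchurCompl H x *ᵥ f ≤ 0 → f = 0)
    {f : V → ℝ} (hf : support f ⊆ S) (hfT : ∀ t ∈ T, f t = 0) (hform : f ⬝ᵥ H *ᵥ f ≤ 0) :
    f = 0 := by
  have hform' : f ⬝ᵥ pivotSchurCompl H x *ᵥ f ≤ 0 := by
    rw [dotProduct_pivotSchurCompl_mulVec]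
    have : 0 ≤ (H x x)⁻¹ * (H x ⬝ᵥ f) ^ 2 := by positivity
    linarith
  have hf₀ : f + (-f x) • Pi.single x 1 = 0 := by
    refine hpos _ (fun v hv => ?_) (fun t ht => ?_) ?_
    · have hvx : v ≠ x := fun hvx => hv (by simp [hvx])
      exact Finset.mem_erase.mpr ⟨hvx, hf fun hfv => hv (by simp [hfv, hvx])⟩
    · rcases eq_or_ne t x with rfl | htx
      · simp
      · simp [hfT t ht, htx]
    · rwa [dotProduct_pivotSchurCompl_mulVec_add_smul_single hH hx.ne']
  have hfx : f = 0 + f x • Pi.single x 1 := by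
    rw [zero_add, eq_neg_of_add_eq_zero_left hf₀]
    simp
  rw [hfx, dotProduct_mulVec_add_smul_single hH, zero_dotProduct, dotProduct_zero] at hform
  have : f x = 0 := by
    by_contra hne
    have := mul_pos hx (pow_pos (abs_pos.mpr hne) 2)
    rw [sq_abs] at this
    linarith
  rw [hfx, this, zero_smul, add_zero]

lemma IsPivotFamily.of_pivotSchurCompl (h : IsPivotFamily (pivotSchurCompl H x) (S.erase x) T g)
    (hH : H.IsSymm) (hxS : x ∈ S) (hx : 0 < H x x)
    (hleaf : {j | j ∈ S.erase x ∧ H x j ≠ 0}.Subsingleton) :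
    IsPivotFamily H S T fun t => pivotLift H x (g t) where
  ne_zero t ht hlift := by
    refine h.ne_zero t ht (funext fun v => ?_)
    by_contra hv
    have hvx : v ≠ x := (Finset.mem_erase.mp (h.support_subset t ht hv)).1
    exact hv ((pivotLift_apply_of_ne H hvx (g t)).symm.trans (congrFun hlift v))
  pairwiseDisjoint t ht u hu htu :=
    disjoint_support_pivotLift hleaf (h.support_subset t ht) (h.support_subset u hu)
      (h.pairwiseDisjoint ht hu htu)
  form_nonpos t ht := by
    rw [dotProduct_mulVec_pivotLift hH hx.ne']
    exact h.form_nonpos t ht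
  subset := h.subset.trans (S.erase_subset x)
  support_subset t ht v hv := by
    rcases eq_or_ne v x with rfl | hvx
    · exact hxS
    · rw [mem_support, pivotLift_apply_of_ne H hvx] at hv
      exact S.erase_subset x (h.support_subset t ht hv)
  eq_zero_of_form_nonpos _ :=
    eq_zero_of_form_nonpos_of_pivotSchurCompl hH hx h.eq_zero_of_form_nonpos

end Elimination

lemma exists_isPivotFamily {F : SimpleGraph V} (hF : F.IsAcyclic) (S : Finset V)
    (hH : H.IsSymm) (hHF : ∀ i ∈ S, ∀ j ∈ S, i ≠ j → H i j ≠ 0 → F.Adj i j) :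
    ∃ T g, IsPivotFamily H S T g := by
  classical
  induction S using Finset.strongInduction generalizing H with
  | H S ih =>
  rcases S.eq_empty_or_nonempty with rfl | hS
  · refine ⟨∅, 0, ⟨by simp, by simp, by simp⟩, by simp, by simp, fun f hf _ _ => ?_⟩
    simpa using hf
  obtain ⟨x, hxS, hleaf⟩ := exists_mem_subsingleton_adj_of_isAcyclic hF hS
  have hHF' : ∀ i ∈ S.erase x, ∀ j ∈ S.erase x, i ≠ j → H i j ≠ 0 → F.Adj i j := fun i hi j hj =>
    hHF i (Finset.mem_of_mem_erase hi) j (Finset.mem_of_mem_erase hj)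
  rcases le_or_gt (H x x) 0 with hx | hx
  · obtain ⟨T, g, h⟩ := ih _ (Finset.erase_ssubset hxS) hH hHF'
    exact ⟨_, _, h.insert hxS hx⟩
  have hleafH : {j | j ∈ S.erase x ∧ H x j ≠ 0}.Subsingleton := hleaf.anti fun j hj =>
    have hjS := Finset.mem_of_mem_erase hj.1
    ⟨hjS, hHF x hxS j hjS (Finset.ne_of_mem_erase hj.1).symm hj.2⟩
  -- A leaf has at most one neighbour, so eliminating it creates no new off-diagonal entry.
  have hfill : ∀ i ∈ S.erase x, ∀ j ∈ S.erase x, i ≠ j → pivotSchurCompl H x i j ≠ 0 →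
      F.Adj i j := by
    intro i hi j hj hij hne
    refine hHF' i hi j hj hij fun h0 => hne ?_
    have : H x i * H x j = 0 := by
      by_contra h
      exact hij (hleafH ⟨hi, left_ne_zero_of_mul h⟩ ⟨hj, right_ne_zero_of_mul h⟩)
    rw [pivotSchurCompl_apply, h0, this, mul_zero, sub_zero]
  obtain ⟨T, g, h⟩ := ih _ (Finset.erase_ssubset hxS) (pivotSchurCompl_isSymm hH x) hfill
  exact ⟨_, _, h.of_pivotSchurCompl hH hxS hx hleafH⟩

end Nodal

section Cycles

lemma finrank_le_finrank_inf_ker_add_finrank {K E E' : Type*} [Field K] [AddCommGroup E]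
    [Module K E] [AddCommGroup E'] [Module K E'] [FiniteDimensional K E] [FiniteDimensional K E']
    (W : Submodule K E) (φ : E →ₗ[K] E') :
    Module.finrank K W ≤ Module.finrank K ↥(W ⊓ LinearMap.ker φ) + Module.finrank K E' := by
  rw [← LinearMap.finrank_range_add_finrank_ker (φ.domRestrict W), LinearMap.ker_domRestrict,
    ← Submodule.map_comap_subtype, Submodule.finrank_map_subtype_eq, add_comm]
  exact Nat.add_le_add_left (Submodule.finrank_le _) _

variable {V : Type*} {H : Matrix V V ℝ}

section CancelEntry

variable [DecidableEq V]

/-- The vector `e_i - sign (H i j) • e_j`, whose square, scaled by `|H i j|`, cancels the entries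
of `H` at `(i, j)` and `(j, i)`. -/
noncomputable def cancelVec (H : Matrix V V ℝ) (i j : V) : V → ℝ :=
  Pi.single i 1 - (SignType.sign (H i j) : ℝ) • Pi.single j 1

/-- The positive semidefinite rank-one perturbation of a symmetric matrix that cancels its
off-diagonal entries at `(i, j)` and `(j, i)`. -/
noncomputable def cancelEntry (H : Matrix V V ℝ) (i j : V) : Matrix V V ℝ :=
  H + |H i j| • vecMulVec (cancelVec H i j) (cancelVec H i j)

lemma cancelEntry_apply (i j a b : V) :
    cancelEntry H i j a b = H a b + |H i j| * (cancelVec H i j a * cancelVec H i j b) := by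
  simp only [cancelEntry, Matrix.add_apply, Matrix.smul_apply, vecMulVec_apply, smul_eq_mul]

lemma cancelEntry_isSymm (hH : H.IsSymm) (i j : V) : (cancelEntry H i j).IsSymm := by
  refine IsSymm.ext fun a b => ?_
  rw [cancelEntry_apply, cancelEntry_apply, hH.apply, mul_comm (cancelVec H i j b)]

lemma cancelEntry_self {i j : V} (hij : i ≠ j) : cancelEntry H i j i j = 0 := by
  simp [cancelEntry_apply, cancelVec, hij, hij.symm]

lemma cancelEntry_apply_of_ne {i j a b : V} (hab : a ≠ b) (hne : s(a, b) ≠ s(i, j)) :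
    cancelEntry H i j a b = H a b := by
  have hzero : cancelVec H i j a * cancelVec H i j b = 0 := by
    have hv : ∀ v, cancelVec H i j v ≠ 0 → v = i ∨ v = j := by
      intro v
      contrapose!
      exact fun ⟨hi, hj⟩ => by simp [cancelVec, hi, hj]
    by_contra h
    rcases hv a (left_ne_zero_of_mul h) with rfl | rfl <;>
      rcases hv b (right_ne_zero_of_mul h) with rfl | rfl <;> simp_all
  rw [cancelEntry_apply, hzero, mul_zero, add_zero]

lemma ne_zero_of_cancelEntry_ne_zero (hH : H.IsSymm) {i j a b : V} (hab : a ≠ b)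
    (h : cancelEntry H i j a b ≠ 0) : H a b ≠ 0 ∧ s(a, b) ≠ s(i, j) := by
  have hne : s(a, b) ≠ s(i, j) := by
    intro heq
    rcases Sym2.eq_iff.mp heq with ⟨rfl, rfl⟩ | ⟨rfl, rfl⟩
    · exact h (cancelEntry_self hab)
    · exact h ((cancelEntry_isSymm hH b a).apply b a ▸ cancelEntry_self hab.symm)
  rw [cancelEntry_apply_of_ne hab hne] at h
  exact ⟨h, hne⟩

lemma dotProduct_cancelEntry_mulVec [Fintype V] (H : Matrix V V ℝ) (i j : V) (f : V → ℝ) :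
    f ⬝ᵥ cancelEntry H i j *ᵥ f = f ⬝ᵥ H *ᵥ f + |H i j| * (cancelVec H i j ⬝ᵥ f) ^ 2 := by
  rw [cancelEntry, add_mulVec, dotProduct_add, smul_mulVec, dotProduct_smul, vecMulVec_mulVec,
    op_smul_eq_smul, dotProduct_smul, smul_eq_mul, smul_eq_mul, dotProduct_comm f (cancelVec H i j),
    sq]

end CancelEntry

theorem exists_isNodalFamily_finrank_le [Fintype V] {F : SimpleGraph V} (hF : F.IsAcyclic)
    (D : Finset (Sym2 V)) (hH : H.IsSymm)
    (hHF : ∀ i j, i ≠ j → H i j ≠ 0 → F.Adj i j ∨ s(i, j) ∈ D) :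
    ∃ T g, IsNodalFamily H T g ∧ ∀ W : Submodule ℝ (V → ℝ), (∀ f ∈ W, f ⬝ᵥ H *ᵥ f ≤ 0) →
      Module.finrank ℝ W ≤ T.card + D.card := by
  classical
  induction D using Finset.induction_on generalizing H with
  | empty =>
    obtain ⟨T, g, h⟩ := exists_isPivotFamily hF Finset.univ hH fun i _ j _ hij hne =>
      (hHF i j hij hne).resolve_right (Finset.notMem_empty _)
    refine ⟨T, g, h.toIsNodalFamily, fun W hW => ?_⟩
    have hinf : W ⊓ LinearMap.ker (LinearMap.funLeft ℝ ℝ ((↑) : T → V)) = ⊥ := by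
      refine (Submodule.eq_bot_iff _).mpr fun f ⟨hfW, hfT⟩ => ?_
      exact h.eq_zero_of_form_nonpos f (by simp) (fun t ht => congrFun hfT ⟨t, ht⟩) (hW f hfW)
    have hker :=
      finrank_le_finrank_inf_ker_add_finrank W (LinearMap.funLeft ℝ ℝ ((↑) : T → V))
    rwa [hinf, finrank_bot, zero_add, Module.finrank_fintype_fun_eq_card, Fintype.card_coe] at hker
  | insert e D he ih =>
    induction e with
    | _ i j =>
    have hHF' : ∀ a b, a ≠ b → cancelEntry H i j a b ≠ 0 → F.Adj a b ∨ s(a, b) ∈ D := by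
      intro a b hab hne
      obtain ⟨hHab, hsab⟩ := ne_zero_of_cancelEntry_ne_zero hH hab hne
      exact (hHF a b hab hHab).imp_right fun h => Finset.mem_of_mem_insert_of_ne h hsab
    obtain ⟨T, g, h, hdim⟩ := ih (cancelEntry_isSymm hH i j) hHF'
    refine ⟨T, g, ⟨h.ne_zero, h.pairwiseDisjoint, fun t ht => ?_⟩, fun W hW => ?_⟩
    · refine le_trans ?_ (h.form_nonpos t ht)
      rw [dotProduct_cancelEntry_mulVec]
      exact le_add_of_nonneg_right (by positivity)
    · have hker := finrank_le_finrank_inf_ker_add_finrank W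
        (dotProductBilin ℝ ℝ (cancelVec H i j))
      have hinf := hdim (W ⊓ LinearMap.ker (dotProductBilin ℝ ℝ (cancelVec H i j)))
        fun f ⟨hfW, hf⟩ => by
          have hf : cancelVec H i j ⬝ᵥ f = 0 := hf
          simpa [dotProduct_cancelEntry_mulVec, hf] using hW f hfW
      rw [Finset.card_insert_of_notMem he]
      rw [Module.finrank_self] at hker
      omega

theorem exists_isNodalFamily_finrank_le_card [Fintype V] (G : SimpleGraph V)
    [Fintype G.edgeSet] (hH : H.IsSymm) (hHG : ∀ i j, i ≠ j → H i j ≠ 0 → G.Adj i j) :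
    ∃ T g, IsNodalFamily H T g ∧
      ∀ W : Submodule ℝ (V → ℝ), (∀ f ∈ W, f ⬝ᵥ H *ᵥ f ≤ 0) →
        Module.finrank ℝ W + Fintype.card V ≤
          T.card + (G.edgeFinset.card + Nat.card G.ConnectedComponent) := by
  obtain ⟨F, hF, D, hFD, hD⟩ := exists_isAcyclic_adj_or_mem_card_le G
  obtain ⟨T, g, hg, hW⟩ := exists_isNodalFamily_finrank_le hF D hH
    fun i j hij hne => hFD i j (hHG i j hij hne)
  exact ⟨T, g, hg, fun W h => by linarith [hW W h]⟩

end Cycles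

section Spectral

lemma card_filter_eq_of_prod_X_sub_C_eq {R ι κ : Type*} [CommRing R] [IsDomain R] [Fintype ι]
    [Fintype κ] {a : ι → R} {b : κ → R} (h : ∏ i, (X - C (a i)) = ∏ j, (X - C (b j)))
    (p : R → Prop) [DecidablePred p] :
    (Finset.univ.filter fun i => p (a i)).card = (Finset.univ.filter fun j => p (b j)).card := by
  have hprod : ((Finset.univ.val.map a).map fun r => X - C r).prod =
      ((Finset.univ.val.map b).map fun r => X - C r).prod := by
    rw [Multiset.map_map, Multiset.map_map]
    exact h
  have hmap : Finset.univ.val.map a = Finset.univ.val.map b := by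
    rw [← roots_multiset_prod_X_sub_C (Finset.univ.val.map a), hprod, roots_multiset_prod_X_sub_C]
  simpa only [Multiset.countP_map] using! congrArg (Multiset.countP p) hmap

variable {V : Type*} [Fintype V] [DecidableEq V]

open scoped MatrixOrder in
lemma exists_transpose_mul_mul_eq_one_and_eq_diagonal {M B : Matrix V V ℝ} (hM : M.PosDef)
    (hB : B.IsSymm) :
    ∃ (N : Matrix V V ℝ) (ν : V → ℝ), Nᵀ * M * N = 1 ∧ Nᵀ * B * N = diagonal ν := by
  obtain ⟨P, hP⟩ : ∃ P : Matrix V V ℝ, Pᵀ * M * P = 1 := by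
    obtain ⟨R, hR, rfl⟩ :=
      CStarAlgebra.isStrictlyPositive_iff_eq_star_mul_self.mp hM.isStrictlyPositive
    have hdet := (isUnit_iff_isUnit_det R).mp hR
    refine ⟨R⁻¹, ?_⟩
    rw [star_eq_conjTranspose, conjTranspose_eq_transpose_of_trivial, mul_assoc, mul_assoc,
      mul_nonsing_inv R hdet, mul_one, ← transpose_mul, mul_nonsing_inv R hdet, transpose_one]
  have hS : (Pᵀ * B * P).IsHermitian := by
    rw [IsHermitian, conjTranspose_eq_transpose_of_trivial, transpose_mul, transpose_mul,
      transpose_transpose, hB.eq, mul_assoc]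
  set U : Matrix V V ℝ := (hS.eigenvectorUnitary : Matrix V V ℝ)
  have hUU : Uᵀ * U = 1 := by
    simpa only [star_eq_conjTranspose, conjTranspose_eq_transpose_of_trivial] using
      Unitary.coe_star_mul_self hS.eigenvectorUnitary
  have hUSU : Uᵀ * (Pᵀ * B * P) * U = diagonal hS.eigenvalues := by
    have := hS.conjStarAlgAut_star_eigenvectorUnitary
    rwa [Unitary.conjStarAlgAut_star_apply, star_eq_conjTranspose,
      conjTranspose_eq_transpose_of_trivial] at this
  have hcongr (Y : Matrix V V ℝ) : (P * U)ᵀ * Y * (P * U) = Uᵀ * (Pᵀ * Y * P) * U := by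
    simp only [transpose_mul, mul_assoc]
  exact ⟨P * U, hS.eigenvalues, by rw [hcongr, hP, mul_one, hUU], by rw [hcongr, hUSU]⟩

lemma charpoly_inv_mul_eq_prod {M B N : Matrix V V ℝ} {ν : V → ℝ} (hM : Nᵀ * M * N = 1)
    (hB : Nᵀ * B * N = diagonal ν) : (M⁻¹ * B).charpoly = ∏ i, (X - C (ν i)) := by
  have hinv : M⁻¹ = N * Nᵀ := by
    refine inv_eq_left_inv ?_
    rwa [mul_eq_one_comm, ← mul_assoc] at hM
  rw [hinv, mul_assoc, charpoly_mul_comm, hB, charpoly_diagonal]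

theorem exists_submodule_card_filter_le_finrank {M B : Matrix V V ℝ} (hM : M.PosDef)
    (hB : B.IsSymm) {ι : Type*} [Fintype ι] {lam : ι → ℝ}
    (hchar : (M⁻¹ * B).charpoly = ∏ i, (X - C (lam i))) (t : ℝ) :
    ∃ W : Submodule ℝ (V → ℝ),
      (Finset.univ.filter fun i => lam i ≤ t).card ≤ Module.finrank ℝ W ∧
      ∀ f ∈ W, f ⬝ᵥ (B - t • M) *ᵥ f ≤ 0 := by
  obtain ⟨N, ν, hNM, hNB⟩ := exists_transpose_mul_mul_eq_one_and_eq_diagonal hM hB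
  rw [charpoly_inv_mul_eq_prod hNM hNB] at hchar
  let Q : Matrix V {v // ν v ≤ t} ℝ := N.submatrix id Subtype.val
  have hQ (Y : Matrix V V ℝ) : Qᵀ * Y * Q = (Nᵀ * Y * N).submatrix Subtype.val Subtype.val := rfl
  have hQM : Qᵀ * M * Q = 1 := by
    rw [hQ, hNM, submatrix_one _ Subtype.val_injective]
  have hQB : Qᵀ * (B - t • M) * Q = diagonal fun v : {v // ν v ≤ t} => ν v - t := by
    rw [hQ, mul_sub, sub_mul, hNB, Matrix.mul_smul, Matrix.smul_mul, hNM,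
      smul_one_eq_diagonal, diagonal_sub, submatrix_diagonal _ _ Subtype.val_injective]
    rfl
  have hinj : Function.Injective Q.mulVecLin := by
    refine (injective_iff_map_eq_zero _).mpr fun c hc => ?_
    rw [mulVecLin_apply] at hc
    rw [← one_mulVec c, ← hQM, ← mulVec_mulVec, hc, mulVec_zero]
  refine ⟨LinearMap.range Q.mulVecLin, ?_, ?_⟩
  · rw [LinearMap.finrank_range_of_inj hinj, Module.finrank_fintype_fun_eq_card,
      Fintype.card_subtype]
    exact (card_filter_eq_of_prod_X_sub_C_eq hchar.symm (· ≤ t)).le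
  · rintro f ⟨c, rfl⟩
    calc Q *ᵥ c ⬝ᵥ (B - t • M) *ᵥ (Q *ᵥ c)
        = c ⬝ᵥ diagonal (fun v : {v // ν v ≤ t} => ν v - t) *ᵥ c := by
          rw [dotProduct_comm, dotProduct_mulVec, ← mulVec_transpose, mulVec_mulVec,
            mulVec_mulVec, hQB, dotProduct_comm]
      _ ≤ 0 := by
          refine Finset.sum_nonpos fun v _ => ?_
          rw [mulVec_diagonal]
          nlinarith [sq_nonneg (c v), v.2]

end Spectral

section LevelSets

open MeasureTheory Set

/-- The signed level function of `b` at height `t`. For `0 < t` it is `1` if `t ≤ b`, `-1` if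
`b ≤ -t` and `0` otherwise; integrating it over `t` recovers `b`. -/
noncomputable def signedLevel (b t : ℝ) : ℝ :=
  (Iic b).indicator 1 t - (Iic (-b)).indicator 1 t

lemma signedLevel_zero (t : ℝ) : signedLevel 0 t = 0 := by
  rw [signedLevel, neg_zero, sub_self]

lemma signedLevel_mul_of_eq_one_or_neg_one {s : ℝ} (hs : s = 1 ∨ s = -1) (b t : ℝ) :
    signedLevel (s * b) t = s * signedLevel b t := by
  rcases hs with rfl | rfl <;> simp [signedLevel]

lemma signedLevel_mono (t : ℝ) : Monotone (signedLevel · t) := fun _ _ hab =>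
  sub_le_sub (indicator_le_indicator_of_subset (Iic_subset_Iic.mpr hab) (fun _ => zero_le_one) t)
    (indicator_le_indicator_of_subset (Iic_subset_Iic.mpr (neg_le_neg hab))
      (fun _ => zero_le_one) t)

lemma integrableOn_signedLevel (b T : ℝ) : IntegrableOn (signedLevel b) (Ioc 0 T) := by
  have hind (c : ℝ) : IntegrableOn ((Iic c).indicator (1 : ℝ → ℝ)) (Ioc 0 T) :=
    (integrableOn_const (C := (1 : ℝ)) measure_Ioc_lt_top.ne).indicator measurableSet_Iic
  exact (hind b).sub (hind (-b))

lemma setIntegral_signedLevel {b T : ℝ} (hb : |b| ≤ T) :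
    ∫ t in Ioc 0 T, signedLevel b t = b := by
  have hind {c : ℝ} (hc : c ≤ T) :
      IntegrableOn ((Iic c).indicator (1 : ℝ → ℝ)) (Ioc 0 T) ∧
        ∫ t in Ioc 0 T, (Iic c).indicator (1 : ℝ → ℝ) t = max c 0 := by
    refine ⟨(integrableOn_const (C := (1 : ℝ)) measure_Ioc_lt_top.ne).indicator measurableSet_Iic,
      ?_⟩
    rw [integral_indicator_one measurableSet_Iic, measureReal_restrict_apply measurableSet_Iic,
      inter_comm, Ioc_inter_Iic, Real.volume_real_Ioc, min_eq_right hc, sub_zero]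
  obtain ⟨hi₁, h₁⟩ := hind (abs_le.mp hb).2
  obtain ⟨hi₂, h₂⟩ := hind (neg_le.mp (abs_le.mp hb).1)
  simp only [signedLevel]
  rw [integral_sub hi₁ hi₂, h₁, h₂, max_zero_sub_max_neg_zero_eq_self]

lemma setIntegral_abs_signedLevel_sub {a b T : ℝ} (ha : |a| ≤ T) (hb : |b| ≤ T) :
    ∫ t in Ioc 0 T, |signedLevel a t - signedLevel b t| = |a - b| := by
  wlog hab : b ≤ a generalizing a b
  · simpa only [abs_sub_comm] using this hb ha (le_of_not_ge hab)
  simp only [abs_of_nonneg (sub_nonneg.mpr (signedLevel_mono _ hab)),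
    abs_of_nonneg (sub_nonneg.mpr hab)]
  rw [integral_sub (integrableOn_signedLevel a T) (integrableOn_signedLevel b T),
    setIntegral_signedLevel ha, setIntegral_signedLevel hb]

end LevelSets

section Coarea

open MeasureTheory

variable {V : Type*} [Fintype V] {w s : V → V → ℝ} {f : V → ℝ} {T : ℝ}

/-- The signed `ℓ¹` Dirichlet energy, or total variation, of `f`. Each unordered pair of vertices
is counted once. -/
noncomputable def signedTV (w s : V → V → ℝ) (f : V → ℝ) : ℝ :=
  (∑ i, ∑ j, w i j * |f i - s i j * f j|) / 2

lemma setIntegral_edge_signedLevel {c σ a b : ℝ} (hσ : c ≠ 0 → σ = 1 ∨ σ = -1) (ha : |a| ≤ T)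
    (hb : |b| ≤ T) :
    IntegrableOn (fun t => c * |signedLevel a t - σ * signedLevel b t|) (Set.Ioc 0 T) ∧
      ∫ t in Set.Ioc 0 T, c * |signedLevel a t - σ * signedLevel b t| = c * |a - σ * b| := by
  refine ⟨(((integrableOn_signedLevel a T).sub
    ((integrableOn_signedLevel b T).const_mul σ)).abs).const_mul c, ?_⟩
  rw [integral_const_mul]
  rcases eq_or_ne c 0 with rfl | hc
  · rw [zero_mul, zero_mul]
  have hσb : |σ * b| ≤ T := by rcases hσ hc with rfl | rfl <;> simpa using hb
  simp only [← signedLevel_mul_of_eq_one_or_neg_one (hσ hc), setIntegral_abs_signedLevel_sub ha hσb]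

lemma setIntegral_signedTV_signedLevel (hs : ∀ i j, w i j ≠ 0 → s i j = 1 ∨ s i j = -1)
    (hf : ∀ i, |f i| ≤ T) :
    IntegrableOn (fun t => signedTV w s fun i => signedLevel (f i) t) (Set.Ioc 0 T) ∧
      ∫ t in Set.Ioc 0 T, signedTV w s (fun i => signedLevel (f i) t) = signedTV w s f := by
  have h i j := setIntegral_edge_signedLevel (hs i j) (hf i) (hf j)
  simp only [signedTV]
  refine ⟨(integrable_finsetSum _ fun i _ => integrable_finsetSum _ fun j _ =>
    (h i j).1).div_const 2, ?_⟩
  rw [integral_div, integral_finsetSum _ fun i _ => integrable_finsetSum _ fun j _ => (h i j).1]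
  simp only [integral_finsetSum _ fun j _ => (h _ j).1, (h _ _).2]

lemma setIntegral_sum_mul_abs_signedLevel (μ : V → ℝ) (hf : ∀ i, |f i| ≤ T) :
    IntegrableOn (fun t => ∑ i, μ i * |signedLevel (f i) t|) (Set.Ioc 0 T) ∧
      ∫ t in Set.Ioc 0 T, ∑ i, μ i * |signedLevel (f i) t| = ∑ i, μ i * |f i| := by
  have hint i : IntegrableOn (fun t => μ i * |signedLevel (f i) t|) (Set.Ioc 0 T) :=
    (integrableOn_signedLevel (f i) T).abs.const_mul (μ i)
  refine ⟨integrable_finsetSum _ fun i _ => hint i, ?_⟩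
  rw [integral_finsetSum _ fun i _ => hint i]
  refine Finset.sum_congr rfl fun i _ => ?_
  have hT : |(0 : ℝ)| ≤ T := abs_zero.trans_le ((abs_nonneg _).trans (hf i))
  rw [integral_const_mul]
  simpa only [signedLevel_zero, sub_zero] using
    congrArg (μ i * ·) (setIntegral_abs_signedLevel_sub (hf i) hT)

lemma exists_signedTV_signedLevel_mul_le (hs : ∀ i j, w i j ≠ 0 → s i j = 1 ∨ s i j = -1)
    (μ : V → ℝ) (hT : 0 < T) (hf : ∀ i, |f i| ≤ T) :
    ∃ t ∈ Set.Ioc 0 T, signedTV w s (fun i => signedLevel (f i) t) * ∑ i, μ i * |f i| ≤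
      signedTV w s f * ∑ i, μ i * |signedLevel (f i) t| := by
  obtain ⟨hTVi, hTV⟩ := setIntegral_signedTV_signedLevel hs hf
  obtain ⟨hmi, hm⟩ := setIntegral_sum_mul_abs_signedLevel μ hf
  have hi₁ := hTVi.mul_const (∑ i, μ i * |f i|)
  have hi₂ := hmi.const_mul (signedTV w s f)
  obtain ⟨t, ht, hle⟩ := exists_le_setAverage (by simpa using hT) measure_Ioc_lt_top.ne
    (hi₁.sub hi₂)
  have hzero : ∫ t in Set.Ioc 0 T, (signedTV w s (fun i => signedLevel (f i) t) * ∑ i, μ i * |f i| -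
      signedTV w s f * ∑ i, μ i * |signedLevel (f i) t|) = 0 := by
    rw [integral_sub hi₁ hi₂, integral_mul_const, integral_const_mul, hTV, hm, sub_self]
  rw [setAverage_eq] at hle
  simp only [Pi.sub_apply] at hle
  rw [hzero, smul_zero] at hle
  exact ⟨t, ht, sub_nonpos.mp hle⟩

end Coarea

section Sweep

variable {V : Type*} [Fintype V] {w s : V → V → ℝ} {μ f : V → ℝ} {V₁ V₂ : Finset V} {t : ℝ}

lemma posEdgeWeight_comm (hw : ∀ i j, w i j = w j i) (hs : ∀ i j, s i j = s j i)
    (V₁ V₂ : Finset V) : posEdgeWeight w s V₁ V₂ = posEdgeWeight w s V₂ V₁ := by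
  rw [posEdgeWeight, Finset.sum_comm]
  simp only [posEdgeWeight, hw, hs]

/-- The sub-bipartition `({t ≤ f}, {f ≤ -t})` cut out by `f` at height `t`. -/
noncomputable def levelPair (f : V → ℝ) (t : ℝ) : Finset V × Finset V :=
  (Finset.univ.filter fun i => t ≤ f i, Finset.univ.filter fun i => t ≤ -f i)

lemma disjoint_levelPair (ht : 0 < t) : Disjoint (levelPair f t).1 (levelPair f t).2 :=
  Finset.disjoint_filter.mpr fun _ _ h₁ h₂ => by linarith

variable [DecidableEq V]

lemma boundaryWeight_eq_sum_compl (hw : ∀ i j, w i j = w j i) (S : Finset V) :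
    boundaryWeight w S = ∑ x ∈ Sᶜ, ∑ y ∈ S, w x y := by
  rw [boundaryWeight, Finset.sum_comm]
  simp only [hw]

lemma sum_sum_mem_eq_sum_sum_ite (A B : Finset V) (c : V → V → ℝ) :
    ∑ x ∈ A, ∑ y ∈ B, c x y = ∑ x, ∑ y, if x ∈ A ∧ y ∈ B then c x y else 0 := by
  simp only [ite_and, Finset.sum_ite_mem, Finset.univ_inter, Finset.sum_ite_irrel,
    Finset.sum_const_zero]

/-- The function `1_{V₁} - 1_{V₂}` attached to a sub-bipartition `(V₁, V₂)`. -/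
noncomputable def signedIndicator (V₁ V₂ : Finset V) (i : V) : ℝ :=
  (if i ∈ V₁ then 1 else 0) - (if i ∈ V₂ then 1 else 0)

lemma mul_abs_signedIndicator_sub {c σ : ℝ} (hσ : c ≠ 0 → σ = 1 ∨ σ = -1)
    (hV : Disjoint V₁ V₂) (i j : V) :
    c * |signedIndicator V₁ V₂ i - σ * signedIndicator V₁ V₂ j| =
      2 * (if i ∈ V₁ ∧ j ∈ V₂ then if σ = 1 then c else 0 else 0) +
      2 * (if i ∈ V₂ ∧ j ∈ V₁ then if σ = 1 then c else 0 else 0) +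
      2 * (if i ∈ V₁ ∧ j ∈ V₁ then if σ = -1 then c else 0 else 0) +
      2 * (if i ∈ V₂ ∧ j ∈ V₂ then if σ = -1 then c else 0 else 0) +
      (if i ∈ V₁ ∪ V₂ ∧ j ∈ (V₁ ∪ V₂)ᶜ then c else 0) +
      (if i ∈ (V₁ ∪ V₂)ᶜ ∧ j ∈ V₁ ∪ V₂ then c else 0) := by
  have hi : i ∈ V₁ → i ∉ V₂ := fun h => Finset.disjoint_left.mp hV h
  have hj : j ∈ V₁ → j ∉ V₂ := fun h => Finset.disjoint_left.mp hV h
  rcases eq_or_ne c 0 with rfl | hc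
  · simp only [zero_mul, ite_self, mul_zero, add_zero]
  have h₁ : (1 : ℝ) ≠ -1 := by norm_num
  have h₂ : |(1 : ℝ) + 1| = 2 := by norm_num
  have h₃ : |(-1 : ℝ) - 1| = 2 := by norm_num
  rcases hσ hc with rfl | rfl <;> by_cases hi₁ : i ∈ V₁ <;> by_cases hj₁ : j ∈ V₁ <;>
    by_cases hi₂ : i ∈ V₂ <;> by_cases hj₂ : j ∈ V₂ <;>
      simp_all [signedIndicator, mul_comm c, h₁.symm]

lemma signedTV_signedIndicator (hw : ∀ i j, w i j = w j i) (hssymm : ∀ i j, s i j = s j i)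
    (hs : ∀ i j, w i j ≠ 0 → s i j = 1 ∨ s i j = -1) (hV : Disjoint V₁ V₂) :
    signedTV w s (signedIndicator V₁ V₂) =
      2 * posEdgeWeight w s V₁ V₂ + negEdgeWeight w s V₁ V₁ + negEdgeWeight w s V₂ V₂ +
        boundaryWeight w (V₁ ∪ V₂) := by
  have hlinear (a b c d e f : V → V → ℝ) :
      ∑ i, ∑ j, (2 * a i j + 2 * b i j + 2 * c i j + 2 * d i j + e i j + f i j) =
        2 * (∑ i, ∑ j, a i j) + 2 * (∑ i, ∑ j, b i j) + 2 * (∑ i, ∑ j, c i j) +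
          2 * (∑ i, ∑ j, d i j) + ∑ i, ∑ j, e i j + ∑ i, ∑ j, f i j := by
    simp only [Finset.sum_add_distrib, Finset.mul_sum]
  have hsum : ∑ i, ∑ j, w i j * |signedIndicator V₁ V₂ i - s i j * signedIndicator V₁ V₂ j| =
      2 * posEdgeWeight w s V₁ V₂ + 2 * posEdgeWeight w s V₂ V₁ + 2 * negEdgeWeight w s V₁ V₁ +
        2 * negEdgeWeight w s V₂ V₂ + boundaryWeight w (V₁ ∪ V₂) +
          ∑ x ∈ (V₁ ∪ V₂)ᶜ, ∑ y ∈ V₁ ∪ V₂, w x y := by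
    simp only [posEdgeWeight, negEdgeWeight, boundaryWeight]
    rw [sum_sum_mem_eq_sum_sum_ite V₁ V₂, sum_sum_mem_eq_sum_sum_ite V₂ V₁,
      sum_sum_mem_eq_sum_sum_ite V₁ V₁, sum_sum_mem_eq_sum_sum_ite V₂ V₂,
      sum_sum_mem_eq_sum_sum_ite (V₁ ∪ V₂), sum_sum_mem_eq_sum_sum_ite (V₁ ∪ V₂)ᶜ]
    exact (Finset.sum_congr rfl fun i _ => Finset.sum_congr rfl fun j _ =>
      mul_abs_signedIndicator_sub (hs i j) hV i j).trans (hlinear _ _ _ _ _ _)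
  rw [signedTV, hsum, posEdgeWeight_comm hw hssymm V₂ V₁, ← boundaryWeight_eq_sum_compl hw]
  ring

lemma sum_mul_abs_signedIndicator (hV : Disjoint V₁ V₂) (μ : V → ℝ) :
    ∑ i, μ i * |signedIndicator V₁ V₂ i| = ∑ i ∈ V₁ ∪ V₂, μ i := by
  rw [← Finset.sum_subset (Finset.subset_univ (V₁ ∪ V₂))]
  · refine Finset.sum_congr rfl fun i hi => ?_
    rcases Finset.mem_union.mp hi with h | h
    · simp [signedIndicator, h, Finset.disjoint_left.mp hV h]
    · simp [signedIndicator, h, Finset.disjoint_right.mp hV h]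
  · intro i _ hi
    rw [Finset.mem_union, not_or] at hi
    simp [signedIndicator, hi]

lemma mem_levelPair_union {i : V} :
    i ∈ (levelPair f t).1 ∪ (levelPair f t).2 ↔ t ≤ |f i| := by
  simp only [levelPair, Finset.mem_union, Finset.mem_filter_univ, le_abs]

lemma signedIndicator_levelPair :
    signedIndicator (levelPair f t).1 (levelPair f t).2 = fun i => signedLevel (f i) t := by
  funext i
  simp only [signedIndicator, levelPair, signedLevel, Finset.mem_filter_univ, Set.indicator,
    Set.mem_Iic, Pi.one_apply]

lemma signedBipartiteness_levelPair (hw : ∀ i j, w i j = w j i) (hssymm : ∀ i j, s i j = s j i)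
    (hs : ∀ i j, w i j ≠ 0 → s i j = 1 ∨ s i j = -1) (ht : 0 < t) :
    signedBipartiteness w s μ (levelPair f t).1 (levelPair f t).2 =
      signedTV w s (fun i => signedLevel (f i) t) / ∑ i, μ i * |signedLevel (f i) t| := by
  have hV := disjoint_levelPair (f := f) ht
  have hTV := signedTV_signedIndicator hw hssymm hs hV
  have hμ := sum_mul_abs_signedIndicator hV μ
  simp only [signedIndicator_levelPair] at hTV hμ
  rw [signedBipartiteness, ← hTV, ← hμ]

lemma exists_signedBipartiteness_mul_le (hw : ∀ i j, w i j = w j i)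
    (hssymm : ∀ i j, s i j = s j i) (hs : ∀ i j, w i j ≠ 0 → s i j = 1 ∨ s i j = -1)
    (hμ : ∀ i, 0 < μ i) (hf : f ≠ 0) :
    ∃ V₁ V₂ : Finset V, Disjoint V₁ V₂ ∧ (V₁ ∪ V₂).Nonempty ∧
      ↑(V₁ ∪ V₂) ⊆ Function.support f ∧
        signedBipartiteness w s μ V₁ V₂ * ∑ i, μ i * |f i| ≤ signedTV w s f := by
  obtain ⟨v, hv⟩ := Function.ne_iff.mp hf
  obtain ⟨m, -, hm⟩ := Finset.exists_max_image Finset.univ (|f ·|) ⟨v, Finset.mem_univ v⟩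
  have hmpos : 0 < |f m| := (abs_pos.mpr hv).trans_le (hm v (Finset.mem_univ v))
  obtain ⟨t, ⟨ht, htm⟩, hle⟩ :=
    exists_signedTV_signedLevel_mul_le hs μ hmpos fun i => hm i (Finset.mem_univ i)
  have hne : ((levelPair f t).1 ∪ (levelPair f t).2).Nonempty := ⟨m, mem_levelPair_union.mpr htm⟩
  refine ⟨_, _, disjoint_levelPair ht, hne, fun i hi => ?_, ?_⟩
  · exact abs_pos.mp (ht.trans_le (mem_levelPair_union.mp hi))
  · have hmass : 0 < ∑ i, μ i * |signedLevel (f i) t| := by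
      have h := sum_mul_abs_signedIndicator (disjoint_levelPair (f := f) ht) μ
      rw [signedIndicator_levelPair] at h
      exact h ▸ Finset.sum_pos (fun i _ => hμ i) hne
    rwa [signedBipartiteness_levelPair hw hssymm hs ht, div_mul_eq_mul_div, div_le_iff₀ hmass]

end Sweep

section Energy

variable {V : Type*} [Fintype V] {w s : V → V → ℝ} {μ : V → ℝ} {lam τ : ℝ}

/-- The signed Dirichlet energy of `f`, which is the quadratic form of `D - A^σ`. Each unordered
pair of vertices is counted once. -/
noncomputable def signedEnergy (w s : V → V → ℝ) (f : V → ℝ) : ℝ :=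
  (∑ i, ∑ j, w i j * (f i - s i j * f j) ^ 2) / 2

lemma signedEnergy_nonneg (hw₀ : ∀ i j, 0 ≤ w i j) (f : V → ℝ) : 0 ≤ signedEnergy w s f :=
  div_nonneg (Finset.sum_nonneg fun i _ => Finset.sum_nonneg fun j _ =>
    mul_nonneg (hw₀ i j) (sq_nonneg _)) zero_le_two

lemma sum_sum_mul_sq_left (f : V → ℝ) :
    ∑ i, ∑ j, w i j * f i ^ 2 = ∑ i, wdeg w i * f i ^ 2 := by
  simp only [wdeg, Finset.sum_mul]

lemma sum_sum_mul_sq_right (hw : ∀ i j, w i j = w j i) (f : V → ℝ) :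
    ∑ i, ∑ j, w i j * f j ^ 2 = ∑ i, wdeg w i * f i ^ 2 := by
  rw [Finset.sum_comm, ← sum_sum_mul_sq_left]
  simp only [hw]

lemma dotProduct_sub_mulVec_eq_signedEnergy [DecidableEq V] (hw : ∀ i j, w i j = w j i)
    (hs : ∀ i j, w i j ≠ 0 → s i j = 1 ∨ s i j = -1) (f : V → ℝ) :
    f ⬝ᵥ (diagonal (wdeg w) - of fun i j => s i j * w i j) *ᵥ f = signedEnergy w s f := by
  have hexpand i j : w i j * (f i - s i j * f j) ^ 2 =
      w i j * f i ^ 2 + w i j * f j ^ 2 - 2 * (f i * (s i j * w i j * f j)) := by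
    rcases eq_or_ne (w i j) 0 with h | h
    · simp only [h, zero_mul, mul_zero, add_zero, sub_zero]
    · rcases hs i j h with h | h <;> rw [h] <;> ring
  have hdiag : f ⬝ᵥ diagonal (wdeg w) *ᵥ f = ∑ i, wdeg w i * f i ^ 2 := by
    simp only [dotProduct, mulVec_diagonal]
    exact Finset.sum_congr rfl fun i _ => by ring
  have hadj : f ⬝ᵥ (of fun i j => s i j * w i j) *ᵥ f =
      ∑ i, ∑ j, f i * (s i j * w i j * f j) := by
    simp only [dotProduct, mulVec, of_apply, Finset.mul_sum]
  rw [sub_mulVec, dotProduct_sub, hdiag, hadj, signedEnergy]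
  simp only [hexpand, Finset.sum_add_distrib, Finset.sum_sub_distrib, ← Finset.mul_sum]
  rw [sum_sum_mul_sq_left, sum_sum_mul_sq_right hw]
  ring

lemma sq_mul_abs_sub_mul_abs_le (a b : ℝ) :
    (a * |a| - b * |b|) ^ 2 ≤ (a - b) ^ 2 * (2 * (a ^ 2 + b ^ 2)) := by
  have hcross : (a * |a| - b * |b|) ^ 2 = a ^ 4 + b ^ 4 - 2 * (a * b) * |a * b| := by
    rw [sub_sq, mul_pow, mul_pow, sq_abs, sq_abs, abs_mul]
    ring
  rcases le_total 0 (a * b) with h | h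
  · rw [hcross, abs_of_nonneg h]
    nlinarith [sq_nonneg ((a - b) ^ 2)]
  · rw [hcross, abs_of_nonpos h]
    nlinarith [mul_nonneg (neg_nonneg.mpr h) (sq_nonneg (a - b)), sq_nonneg (a ^ 2 - b ^ 2)]

/-- The signed square of `f`, which turns `ℓ²` estimates into `ℓ¹` ones. -/
def signedSq {ι : Type*} (f : ι → ℝ) (i : ι) : ℝ := f i * |f i|

lemma abs_signedSq {ι : Type*} (f : ι → ℝ) (i : ι) : |signedSq f i| = f i ^ 2 := by
  rw [signedSq, abs_mul, abs_abs, abs_mul_abs_self, sq]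

lemma support_signedSq {ι : Type*} (f : ι → ℝ) :
    Function.support (signedSq f) = Function.support f := by
  ext i
  simp only [Function.mem_support, signedSq, ne_eq, mul_eq_zero, abs_eq_zero, or_self]

lemma sq_signedSq_sub_mul_le {ι : Type*} {σ : ℝ} (hσ : σ = 1 ∨ σ = -1) (f : ι → ℝ) (i j : ι) :
    (signedSq f i - σ * signedSq f j) ^ 2 ≤
      (f i - σ * f j) ^ 2 * (2 * (f i ^ 2 + f j ^ 2)) := by
  have h := sq_mul_abs_sub_mul_abs_le (f i) (σ * f j)
  rcases hσ with rfl | rfl <;> simpa [signedSq] using h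

lemma sq_signedTV_signedSq_le (hw : ∀ i j, w i j = w j i) (hw₀ : ∀ i j, 0 ≤ w i j)
    (hs : ∀ i j, w i j ≠ 0 → s i j = 1 ∨ s i j = -1) (f : V → ℝ) :
    signedTV w s (signedSq f) ^ 2 ≤ 2 * signedEnergy w s f * ∑ i, wdeg w i * f i ^ 2 := by
  have hcs : (∑ p : V × V, w p.1 p.2 * |signedSq f p.1 - s p.1 p.2 * signedSq f p.2|) ^ 2 ≤
      (∑ p : V × V, w p.1 p.2 * (f p.1 - s p.1 p.2 * f p.2) ^ 2) *
        ∑ p : V × V, w p.1 p.2 * (2 * (f p.1 ^ 2 + f p.2 ^ 2)) := by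
    refine Finset.sum_sq_le_sum_mul_sum_of_sq_le_mul _
      (fun p _ => mul_nonneg (hw₀ _ _) (sq_nonneg _))
      (fun p _ => mul_nonneg (hw₀ _ _) (by positivity)) fun p _ => ?_
    rcases eq_or_ne (w p.1 p.2) 0 with h | h
    · simp only [h, zero_mul, mul_zero, ne_eq, OfNat.ofNat_ne_zero, not_false_eq_true, zero_pow,
        le_refl]
    · rw [mul_pow, sq_abs, mul_mul_mul_comm, ← sq]
      exact mul_le_mul_of_nonneg_left (sq_signedSq_sub_mul_le (hs _ _ h) f _ _) (sq_nonneg _)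
  have hdeg : ∑ i, ∑ j, w i j * (2 * (f i ^ 2 + f j ^ 2)) = 4 * ∑ i, wdeg w i * f i ^ 2 := by
    simp only [mul_left_comm _ (2 : ℝ), ← Finset.mul_sum, mul_add, Finset.sum_add_distrib,
      sum_sum_mul_sq_left, sum_sum_mul_sq_right hw]
    ring
  simp only [Fintype.sum_prod_type, hdeg] at hcs
  rw [signedTV, signedEnergy, div_pow]
  linarith

lemma exists_signedBipartiteness_le_sqrt [DecidableEq V] (hw : ∀ i j, w i j = w j i)
    (hw₀ : ∀ i j, 0 ≤ w i j) (hssymm : ∀ i j, s i j = s j i)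
    (hs : ∀ i j, w i j ≠ 0 → s i j = 1 ∨ s i j = -1) (hμ : ∀ i, 0 < μ i)
    (hτ : ∀ i, wdeg w i ≤ τ * μ i) {g : V → ℝ} (hg : g ≠ 0)
    (hlam : signedEnergy w s g ≤ lam * ∑ i, μ i * g i ^ 2) :
    ∃ V₁ V₂ : Finset V, Disjoint V₁ V₂ ∧ (V₁ ∪ V₂).Nonempty ∧
      ↑(V₁ ∪ V₂) ⊆ Function.support g ∧
        signedBipartiteness w s μ V₁ V₂ ≤ √(2 * τ * lam) := by
  have hsq : signedSq g ≠ 0 := by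
    rwa [← Function.support_nonempty_iff, support_signedSq, Function.support_nonempty_iff]
  obtain ⟨V₁, V₂, hV, hne, hsupp, hle⟩ :=
    exists_signedBipartiteness_mul_le hw hssymm hs hμ hsq
  refine ⟨V₁, V₂, hV, hne, support_signedSq g ▸ hsupp, ?_⟩
  simp only [abs_signedSq] at hle
  have hmass : 0 < ∑ i, μ i * g i ^ 2 := by
    obtain ⟨v, hv⟩ := Function.ne_iff.mp hg
    exact Finset.sum_pos' (fun i _ => mul_nonneg (hμ i).le (sq_nonneg _))
      ⟨v, Finset.mem_univ v, mul_pos (hμ v) (sq_pos_of_ne_zero hv)⟩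
  have hdeg : ∑ i, wdeg w i * g i ^ 2 ≤ τ * ∑ i, μ i * g i ^ 2 := by
    rw [Finset.mul_sum]
    exact Finset.sum_le_sum fun i _ =>
      (mul_le_mul_of_nonneg_right (hτ i) (sq_nonneg _)).trans_eq (mul_assoc _ _ _)
  have hTV : signedTV w s (signedSq g) ^ 2 ≤ 2 * τ * lam * (∑ i, μ i * g i ^ 2) ^ 2 :=
    calc signedTV w s (signedSq g) ^ 2
        ≤ 2 * signedEnergy w s g * ∑ i, wdeg w i * g i ^ 2 :=
          sq_signedTV_signedSq_le hw hw₀ hs g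
      _ ≤ 2 * (lam * ∑ i, μ i * g i ^ 2) * (τ * ∑ i, μ i * g i ^ 2) := by
          refine mul_le_mul (mul_le_mul_of_nonneg_left hlam zero_le_two) hdeg ?_ ?_
          · exact Finset.sum_nonneg fun i _ =>
              mul_nonneg (Finset.sum_nonneg fun j _ => hw₀ i j) (sq_nonneg _)
          · exact mul_nonneg zero_le_two ((signedEnergy_nonneg hw₀ g).trans hlam)
      _ = 2 * τ * lam * (∑ i, μ i * g i ^ 2) ^ 2 := by ring
  refine le_of_mul_le_mul_right (hle.trans ?_) hmass
  rw [← Real.sqrt_sq hmass.le, ← Real.sqrt_mul' _ (sq_nonneg _)]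
  exact Real.le_sqrt_of_sq_le hTV

end Energy

section Cheeger

variable {V : Type*} [Fintype V] [DecidableEq V] {w s : V → V → ℝ} {μ κ : V → ℝ}

lemma signedBipartiteness_nonneg (hw₀ : ∀ i j, 0 ≤ w i j) (hμ : ∀ i, 0 ≤ μ i)
    (V₁ V₂ : Finset V) : 0 ≤ signedBipartiteness w s μ V₁ V₂ := by
  have hite (p : Prop) [Decidable p] (i j : V) : 0 ≤ if p then w i j else 0 :=
    ite_nonneg (hw₀ i j) le_rfl
  have hsum (A B : Finset V) (c : V → V → ℝ) (hc : ∀ i j, 0 ≤ c i j) :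
      0 ≤ ∑ i ∈ A, ∑ j ∈ B, c i j :=
    Finset.sum_nonneg fun i _ => Finset.sum_nonneg fun j _ => hc i j
  have hpos : 0 ≤ posEdgeWeight w s V₁ V₂ := hsum _ _ _ fun i j => hite _ i j
  have hneg (A : Finset V) : 0 ≤ negEdgeWeight w s A A := hsum _ _ _ fun i j => hite _ i j
  have hbd : 0 ≤ boundaryWeight w (V₁ ∪ V₂) := hsum _ _ _ hw₀
  exact div_nonneg (by linarith [hneg V₁, hneg V₂]) (Finset.sum_nonneg fun i _ => hμ i)

lemma signedCheeger_le {m : ℕ} {c : ℝ} (hw₀ : ∀ i j, 0 ≤ w i j) (hμ : ∀ i, 0 ≤ μ i) (hc : 0 ≤ c)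
    {V₁ V₂ : Fin m → Finset V} (hV : ∀ i, Disjoint (V₁ i) (V₂ i))
    (hne : ∀ i, (V₁ i ∪ V₂ i).Nonempty)
    (hdisj : Pairwise fun i j => Disjoint (V₁ i ∪ V₂ i) (V₁ j ∪ V₂ j))
    (hle : ∀ i, signedBipartiteness w s μ (V₁ i) (V₂ i) ≤ c) : signedCheeger m w s μ ≤ c := by
  refine csInf_le_of_le ⟨0, ?_⟩ ⟨fun i => (V₁ i, V₂ i), fun i => ⟨hV i, hne i⟩, hdisj, rfl⟩
    (Real.iSup_le hle hc)
  rintro _ ⟨p, -, -, rfl⟩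
  exact Real.iSup_nonneg fun i => signedBipartiteness_nonneg hw₀ hμ _ _

lemma signedCheeger_le_sqrt_of_isNodalFamily {m : ℕ} {lam : ℝ} (hw : ∀ i j, w i j = w j i)
    (hw₀ : ∀ i j, 0 ≤ w i j) (hssymm : ∀ i j, s i j = s j i)
    (hs : ∀ i j, w i j ≠ 0 → s i j = 1 ∨ s i j = -1) (hμ : ∀ i, 0 < μ i) (hκ : ∀ i, 0 ≤ κ i)
    {T : Finset V} {g : V → V → ℝ}
    (h : IsNodalFamily (diagonal (wdeg w) - of (fun i j => s i j * w i j) + diagonal κ -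
      lam • diagonal μ) T g) (hm : m ≤ T.card) :
    signedCheeger m w s μ ≤ √(2 * (⨆ i, wdeg w i / μ i) * lam) := by
  have hτ i : wdeg w i ≤ (⨆ i, wdeg w i / μ i) * μ i :=
    (div_le_iff₀ (hμ i)).mp (le_ciSup (Set.finite_range fun i => wdeg w i / μ i).bddAbove i)
  have henergy t (ht : t ∈ T) : signedEnergy w s (g t) ≤ lam * ∑ i, μ i * g t i ^ 2 := by
    have hdiag (d : V → ℝ) : g t ⬝ᵥ diagonal d *ᵥ g t = ∑ i, d i * g t i ^ 2 := by
      simp only [dotProduct, mulVec_diagonal]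
      exact Finset.sum_congr rfl fun i _ => by ring
    have hform := h.form_nonpos t ht
    rw [sub_mulVec, add_mulVec, dotProduct_sub, dotProduct_add, smul_mulVec, dotProduct_smul,
      dotProduct_sub_mulVec_eq_signedEnergy hw hs, hdiag, hdiag, smul_eq_mul] at hform
    have hκg : 0 ≤ ∑ i, κ i * g t i ^ 2 :=
      Finset.sum_nonneg fun i _ => mul_nonneg (hκ i) (sq_nonneg _)
    linarith
  obtain ⟨e⟩ : Nonempty (Fin m ↪ T) :=
    Function.Embedding.nonempty_of_card_le (by rwa [Fintype.card_fin, Fintype.card_coe])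
  choose V₁ V₂ hV hne hsupp hle using fun i => exists_signedBipartiteness_le_sqrt hw hw₀ hssymm hs
    hμ hτ (h.ne_zero _ (e i).2) (henergy _ (e i).2)
  refine signedCheeger_le hw₀ (fun i => (hμ i).le) (Real.sqrt_nonneg _) hV hne
    (fun i j hij => Finset.disjoint_coe.mp ?_) hle
  exact (h.pairwiseDisjoint (e i).2 (e j).2
    (Subtype.coe_injective.ne (e.injective.ne hij))).mono (hsupp i) (hsupp j)

/-- The cyclomatic number of a possibly disconnected graph is the `l` with
`l + |V| = |E| + #components`. -/
theorem signed_multiway_cheeger_cyclomatic_general (G : SimpleGraph V) [Fintype G.edgeSet]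
    (hw : ∀ i j, w i j = w j i) (hw₀ : ∀ i j, 0 ≤ w i j) (hzero : ∀ i j, ¬ G.Adj i j → w i j = 0)
    (hssymm : ∀ i j, s i j = s j i) (hsval : ∀ i j, G.Adj i j → s i j = 1 ∨ s i j = -1)
    (hμ : ∀ i, 0 < μ i) (hκ : ∀ i, 0 ≤ κ i)
    {n : ℕ} {lam : Fin n → ℝ} (hmono : Monotone lam)
    (hchar : (signedNormLap w s μ κ).charpoly = ∏ i, (X - C (lam i)))
    {l : ℕ} (hl : l + Fintype.card V = G.edgeFinset.card + Nat.card G.ConnectedComponent)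
    {m : ℕ} {k : Fin n} (hk : m + l = k) :
    signedCheeger (m + 1) w s μ ≤ √(2 * (⨆ i, wdeg w i / μ i) * lam k) := by
  have hs i j (hij : w i j ≠ 0) := hsval i j (not_imp_comm.mp (hzero i j) hij)
  have hB : (diagonal (wdeg w) - of (fun i j => s i j * w i j) + diagonal κ).IsSymm := by
    have hA : (of fun i j => s i j * w i j).IsSymm := by
      ext i j
      rw [transpose_apply, of_apply, of_apply, hw, hssymm]
    exact ((isSymm_diagonal _).sub hA).add (isSymm_diagonal _)
  obtain ⟨W, hdim, hW⟩ :=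
    exists_submodule_card_filter_le_finrank (PosDef.diagonal hμ) hB hchar (lam k)
  have hadj i j (hij : i ≠ j) (hne : (diagonal (wdeg w) - of (fun i j => s i j * w i j) +
      diagonal κ - lam k • diagonal μ) i j ≠ 0) : G.Adj i j := by
    refine not_imp_comm.mp (hzero i j) fun h => hne ?_
    simp [hij, h]
  obtain ⟨T, g, hg, hcard⟩ := exists_isNodalFamily_finrank_le_card G
    (hB.sub ((isSymm_diagonal μ).smul (lam k))) hadj
  have hfilter : (k : ℕ) + 1 ≤ (Finset.univ.filter fun i => lam i ≤ lam k).card := by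
    rw [← Fin.card_Iic]
    exact Finset.card_le_card fun i hi =>
      Finset.mem_filter_univ i |>.mpr (hmono (Finset.mem_Iic.mp hi))
  have hT := hcard W hW
  exact signedCheeger_le_sqrt_of_isNodalFamily hw hw₀ hssymm hs hμ hκ hg (by omega)

end Cheeger

/-- **Higher-order signed Cheeger inequalities via the cyclomatic number.** For a finite
connected signed graph with nonnegative potential, with cyclomatic number `ℓ = |E| - |V| + 1`,
for every `ℓ + 1 ≤ k ≤ n` one has `ρ^σ_{k-ℓ}(Γ) ≤ √(2 τ_Γ λ^σ_k)`, where
`λ^σ_1 ≤ … ≤ λ^σ_n` are the eigenvalues of the normalized signed Laplacian listed with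
multiplicity in ascending order. -/
theorem signed_multiway_cheeger_cyclomatic (n : ℕ) (G : SimpleGraph (Fin n))
    [DecidableRel G.Adj] (hconn : G.Connected)
    (w : Fin n → Fin n → ℝ) (hsymm : ∀ i j, w i j = w j i)
    (hpos : ∀ i j, G.Adj i j → 0 < w i j) (hzero : ∀ i j, ¬ G.Adj i j → w i j = 0)
    (s : Fin n → Fin n → ℝ) (hssymm : ∀ i j, s i j = s j i)
    (hsval : ∀ i j, G.Adj i j → s i j = 1 ∨ s i j = -1)
    (μ : Fin n → ℝ) (hμ : ∀ i, 0 < μ i)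
    (κ : Fin n → ℝ) (hκ : ∀ i, 0 ≤ κ i)
    (lam : Fin n → ℝ) (hmono : Monotone lam)
    (hchar : (signedNormLap w s μ κ).charpoly = ∏ i, (X - C (lam i)))
    (l : ℕ) (hl : l = G.edgeFinset.card + 1 - n)
    (k : ℕ) (hk1 : l + 1 ≤ k) (hk2 : k ≤ n) :
    signedCheeger (k - l) w s μ ≤
      Real.sqrt (2 * (⨆ i, wdeg w i / μ i) * lam ⟨k - 1, by omega⟩) := by
  have hw₀ i j : 0 ≤ w i j :=
    (em (G.Adj i j)).elim (fun h => (hpos i j h).le) fun h => (hzero i j h).ge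
  have hcyc := card_edgeFinset_add_one_sub_card_add_card hconn
  rw [Fintype.card_fin, ← hl] at hcyc
  rw [show k - l = k - l - 1 + 1 by omega]
  exact signed_multiway_cheeger_cyclomatic_general G hsymm hw₀ hzero hssymm hsval hμ hκ hmono
    hchar (by rwa [Fintype.card_fin]) (by rw [Fin.val_mk]; omega)
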